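/- arXiv:1011.3071 — 2 statements merged into one kernel-verified Lean document; each statement's English description precedes it below -/
import Mathlib

section
/- For every ε > 0, the Moreau–Yosida approximation θ_ε : E → ℝ is a convex function that is differentiable at every point, with Fréchet derivative at x given by the linear map v ↦ ⟨(x − J_ε(x))/ε, v⟩; in particular the gradient map x ↦ (x − J_ε(x))/ε is Lipschitz continuous (with constant 1/ε). -/
open scoped RealInnerProductSpace

/-- The function `y ↦ ‖x − y‖²/(2ε) + θ(y)` whose infimum defines the
Moreau–Yosida approximation. -/
noncomputable def moreauFn {k : ℕ} (θ : EuclideanSpace ℝ (Fin k) → EReal) (ε : ℝ)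
    (x y : EuclideanSpace ℝ (Fin k)) : EReal :=
  ((‖x - y‖ ^ 2 / (2 * ε) : ℝ) : EReal) + θ y

/-- The Moreau–Yosida approximation `θ_ε : E → ℝ` is convex and everywhere differentiable,
with Fréchet derivative at `x` given by `v ↦ ⟨(x − J_ε(x))/ε, v⟩`; moreover the gradient map
`x ↦ (x − J_ε(x))/ε` is Lipschitz with constant `1/ε`.  Here `J x` denotes the (unique)
minimizer of `y ↦ ‖x − y‖²/(2ε) + θ(y)` and
`θ_ε(x) = ⨅ y, (‖x − y‖²/(2ε) + θ(y))` (a real number). -/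
theorem moreau_yosida_convex_differentiable {k : ℕ}
    (θ : EuclideanSpace ℝ (Fin k) → EReal)
    (hbot : ∀ x, θ x ≠ ⊥)
    (hproper : ∃ x, θ x ≠ ⊤)
    (hconv : Convex ℝ {p : EuclideanSpace ℝ (Fin k) × ℝ | θ p.1 ≤ (p.2 : EReal)})
    (hlsc : LowerSemicontinuous θ)
    (ε : ℝ) (hε : 0 < ε)
    (J : EuclideanSpace ℝ (Fin k) → EuclideanSpace ℝ (Fin k))
    (hJ : ∀ x z, moreauFn θ ε x (J x) ≤ moreauFn θ ε x z)
    (θε : EuclideanSpace ℝ (Fin k) → ℝ)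
    (hθε : ∀ x, θε x = (⨅ y, moreauFn θ ε x y).toReal) :
    ConvexOn ℝ Set.univ θε ∧
    (∀ x, HasFDerivAt θε
      ((InnerProductSpace.toDual ℝ (EuclideanSpace ℝ (Fin k))) (ε⁻¹ • (x - J x)) :
        EuclideanSpace ℝ (Fin k) →L[ℝ] ℝ) x) ∧
    ∀ x y, ‖ε⁻¹ • (x - J x) - ε⁻¹ • (y - J y)‖ ≤ ε⁻¹ * ‖x - y‖ := by
  obtain ⟨z0, hz0⟩ := hproper
  have hfin : ∀ x, ∃ T : ℝ, θ (J x) = (T : EReal) := by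
    intro x
    have h := hJ x z0
    unfold moreauFn at h
    have hne : θ (J x) ≠ ⊤ := by
      intro ht
      rw [ht, EReal.coe_add_top, top_le_iff] at h
      lift θ z0 to ℝ using ⟨hz0, hbot z0⟩ with c
      rw [← EReal.coe_add] at h
      exact EReal.coe_ne_top _ h
    exact ⟨(θ (J x)).toReal, (EReal.coe_toReal hne (hbot _)).symm⟩
  choose T hT using hfin
  have hval : ∀ x, θε x = ‖x - J x‖ ^ 2 / (2 * ε) + T x := by
    intro x
    have h1 : (⨅ y, moreauFn θ ε x y) = moreauFn θ ε x (J x) :=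
      le_antisymm (iInf_le _ _) (le_iInf (hJ x))
    rw [hθε, h1]
    unfold moreauFn
    rw [hT, ← EReal.coe_add, EReal.toReal_coe]
  have hA : ∀ x z (t : ℝ), θ z ≤ (t : EReal) → θε x ≤ ‖x - z‖ ^ 2 / (2 * ε) + t := by
    intro x z t ht
    have h := hJ x z
    unfold moreauFn at h
    rw [hT, ← EReal.coe_add] at h
    have h2 := h.trans (add_le_add_right ht _)
    rw [← EReal.coe_add, EReal.coe_le_coe_iff] at h2
    rw [hval]; exact h2
  have hB : ∀ x z (t : ℝ), θ z ≤ (t : EReal) →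
      ⟪x - J x, z - J x⟫ ≤ ε * (t - T x) := by
    intro x z t ht
    have key : ∀ s : ℝ, 0 < s → s ≤ 1 →
        ⟪x - J x, z - J x⟫ ≤ ε * (t - T x) + s * (‖z - J x‖ ^ 2 / 2) := by
      intro s hs hs1
      have hc := hconv (x := (J x, T x)) (by simp [hT]) (y := (z, t)) (by simpa using ht)
        (a := 1 - s) (b := s) (by linarith) hs.le (by ring)
      have h := hA x _ _ hc
      rw [hval] at h
      have e : x - ((1 - s) • (J x, T x) + s • (z, t)).1 = (x - J x) - s • (z - J x) := by
        simp only [Prod.fst_add, Prod.smul_fst]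
        module
      rw [e, norm_sub_sq_real (x - J x) (s • (z - J x)), inner_smul_right, norm_smul, mul_pow, Real.norm_eq_abs,
        sq_abs] at h
      simp only [Prod.snd_add, Prod.smul_snd, smul_eq_mul] at h
      have e2 := mul_le_mul_of_nonneg_left h (by positivity : (0 : ℝ) ≤ 2 * ε)
      rw [mul_add, mul_add, mul_div_cancel₀ _ (by positivity),
        mul_div_cancel₀ _ (by positivity)] at e2
      have e3 : s * ⟪x - J x, z - J x⟫ ≤
          s * (ε * (t - T x) + s * (‖z - J x‖ ^ 2 / 2)) := by nlinarith
      exact le_of_mul_le_mul_left e3 hs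
    have hl : Filter.Tendsto (fun s : ℝ => ε * (t - T x) + s * (‖z - J x‖ ^ 2 / 2))
        (nhdsWithin 0 (Set.Ioi 0)) (nhds (ε * (t - T x) + 0 * (‖z - J x‖ ^ 2 / 2))) :=
      Filter.Tendsto.mono_left (Continuous.tendsto (by fun_prop) 0) nhdsWithin_le_nhds
    rw [zero_mul, add_zero] at hl
    refine ge_of_tendsto hl ?_
    filter_upwards [Ioc_mem_nhdsGT (zero_lt_one' ℝ)] with s hs
    exact key s hs.1 hs.2
  have hlow : ∀ x y, ε⁻¹ * ⟪x - J x, y - x⟫ + ε⁻¹ * (‖(y - J y) - (x - J x)‖ ^ 2 / 2)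
      ≤ θε y - θε x := by
    intro x y
    have h := hB x (J y) (T y) (hT y).le
    have e : J y - J x = (y - x) - ((y - J y) - (x - J x)) := by abel
    rw [e, inner_sub_right, inner_sub_right (x - J x) (y - J y), real_inner_self_eq_norm_sq] at h
    rw [hval, hval, norm_sub_sq_real, real_inner_comm]
    rw [← mul_add, inv_mul_le_iff₀ hε]
    have e2 : ε * (‖y - J y‖ ^ 2 / (2 * ε) + T y - (‖x - J x‖ ^ 2 / (2 * ε) + T x))
      = ‖y - J y‖ ^ 2 / 2 - ‖x - J x‖ ^ 2 / 2 + ε * (T y - T x) := by field_simp; ring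
    rw [e2]
    have c1 := real_inner_comm (x - J x) (y - J y)
    have c2 := real_inner_comm (x - J x) (y - x)
    linarith
  have hup : ∀ x y, θε y - θε x ≤ ε⁻¹ * ⟪x - J x, y - x⟫ + ε⁻¹ * (‖y - x‖ ^ 2 / 2) := by
    intro x y
    have h := hA y (J x) (T x) (hT x).le
    have e : y - J x = (x - J x) + (y - x) := by abel
    rw [e, norm_add_sq_real] at h
    rw [hval x]
    have e2 : (‖x - J x‖ ^ 2 + 2 * ⟪x - J x, y - x⟫ + ‖y - x‖ ^ 2) / (2 * ε)
      = ‖x - J x‖ ^ 2 / (2 * ε) + ε⁻¹ * ⟪x - J x, y - x⟫ + ε⁻¹ * (‖y - x‖ ^ 2 / 2) := by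
      field_simp
    linarith
  have hεi : 0 < ε⁻¹ := inv_pos.mpr hε
  refine ⟨⟨convex_univ, ?_⟩, ?_, ?_⟩
  · intro x _ y _ a b ha hb hab
    set m := a • x + b • y with hm
    have h1 : ε⁻¹ * ⟪m - J m, x - m⟫ ≤ θε x - θε m :=
      le_trans (le_add_of_nonneg_right (by positivity)) (hlow m x)
    have h2 : ε⁻¹ * ⟪m - J m, y - m⟫ ≤ θε y - θε m :=
      le_trans (le_add_of_nonneg_right (by positivity)) (hlow m y)
    have e : a * ⟪m - J m, x - m⟫ + b * ⟪m - J m, y - m⟫ = 0 := by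
      rw [← inner_smul_right, ← inner_smul_right, ← inner_add_right]
      have : a • (x - m) + b • (y - m) = 0 := by
        have : a • (x - m) + b • (y - m) = (a • x + b • y) - (a + b) • m := by module
        rw [this, hab, one_smul, ← hm, sub_self]
      rw [this, inner_zero_right]
    have h3 := mul_le_mul_of_nonneg_left h1 ha
    have h4 := mul_le_mul_of_nonneg_left h2 hb
    have e' : a * (ε⁻¹ * ⟪m - J m, x - m⟫) + b * (ε⁻¹ * ⟪m - J m, y - m⟫) = 0 := by
      linear_combination ε⁻¹ * e
    have e5 : (a + b) * θε m = θε m := by rw [hab, one_mul]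
    simp only [smul_eq_mul]
    nlinarith
  · intro x
    rw [hasFDerivAt_iff_isLittleO]
    have hO : (fun y => θε y - θε x - ((InnerProductSpace.toDual ℝ (EuclideanSpace ℝ (Fin k)))
        (ε⁻¹ • (x - J x)) : EuclideanSpace ℝ (Fin k) →L[ℝ] ℝ) (y - x))
        =O[nhds x] fun y => ‖y - x‖ ^ 2 := by
      refine Asymptotics.IsBigO.of_bound (ε⁻¹ / 2) (Filter.Eventually.of_forall fun y => ?_)
      rw [InnerProductSpace.toDual_apply_apply, real_inner_smul_left, Real.norm_eq_abs,
        Real.norm_of_nonneg (by positivity), abs_le]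
      have h1 := hup x y
      have h2 := hlow x y
      have p1 : 0 ≤ ε⁻¹ * (‖(y - J y) - (x - J x)‖ ^ 2 / 2) := by positivity
      have p2 : 0 ≤ ε⁻¹ / 2 * ‖y - x‖ ^ 2 := by positivity
      constructor <;> linarith
    refine hO.trans_isLittleO ?_
    exact Asymptotics.isLittleO_pow_sub_sub x (by norm_num)
  · intro x y
    rw [← smul_sub, norm_smul, Real.norm_of_nonneg hεi.le]
    refine mul_le_mul_of_nonneg_left ?_ hεi.le
    have h1 := hlow x y
    have h2 := hlow y x
    rw [← mul_add] at h1 h2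
    have e1 : ‖(y - J y) - (x - J x)‖ = ‖(x - J x) - (y - J y)‖ := norm_sub_rev _ _
    have e2 : ⟪x - J x, y - x⟫ = - ⟪x - J x, x - y⟫ := by rw [← inner_neg_right, neg_sub]
    rw [e1, e2] at h1
    have h3 : ε⁻¹ * (‖(x - J x) - (y - J y)‖ ^ 2 - ⟪(x - J x) - (y - J y), x - y⟫) ≤ 0 := by
      rw [inner_sub_left]
      linarith
    have h4 : ‖(x - J x) - (y - J y)‖ ^ 2 - ⟪(x - J x) - (y - J y), x - y⟫ ≤ 0 := by
      by_contra hc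
      push Not at hc
      exact absurd h3 (not_le.mpr (mul_pos hεi hc))
    have h5 := real_inner_le_norm ((x - J x) - (y - J y)) (x - y)
    by_contra hc
    push Not at hc
    nlinarith [norm_nonneg (x - y)]
end

section
/- There exists a constant α > 0 such that for every x ∈ ∂Θ and every x' in the closure of Θ, ‖x − x'‖² + α⟨x' − x, ∇φ(x)⟩ ≥ 0. -/
open scoped RealInnerProductSpace

/-- For a smooth bounded domain `Θ = {φ > 0}` with boundary `∂Θ = {φ = 0}` (where
`φ ∈ C²_b(ℝ^d)` and `∇φ` is the unit interior normal on the boundary), there is a constant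
`α > 0` such that `‖x − x'‖² + α⟨x' − x, ∇φ(x)⟩ ≥ 0` for all `x ∈ ∂Θ` and `x'` in the
closure of `Θ`. -/
theorem boundary_inequality (d : ℕ) (hd : 1 ≤ d)
    (Θ : Set (EuclideanSpace ℝ (Fin d)))
    (φ : EuclideanSpace ℝ (Fin d) → ℝ)
    (hφ : ContDiff ℝ 2 φ)
    (hφb : ∃ C : ℝ, ∀ x, ‖fderiv ℝ φ x‖ ≤ C ∧ ‖fderiv ℝ (fderiv ℝ φ) x‖ ≤ C)
    (hΘ : Θ = {x | 0 < φ x})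
    (hΘconn : IsConnected Θ)
    (hΘbdd : Bornology.IsBounded Θ)
    (hbdry : frontier Θ = {x | φ x = 0})
    (hnormal : ∀ x ∈ frontier Θ, ‖gradient φ x‖ = 1) :
    ∃ α : ℝ, 0 < α ∧ ∀ x ∈ frontier Θ, ∀ x' ∈ closure Θ,
      0 ≤ ‖x - x'‖ ^ 2 + α * ⟪x' - x, gradient φ x⟫ := by
  obtain ⟨C, hC⟩ := hφb
  have hC0 : 0 ≤ C := le_trans (norm_nonneg _) (hC 0).1
  have hd1 : Differentiable ℝ φ := hφ.differentiable (by norm_num)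
  have hd2 : Differentiable ℝ (fderiv ℝ φ) :=
    (hφ.fderiv_right (m := 1) (by norm_num)).differentiable (by norm_num)
  have hlip : ∀ a b, ‖fderiv ℝ φ b - fderiv ℝ φ a‖ ≤ C * ‖b - a‖ := fun a b =>
    convex_univ.norm_image_sub_le_of_norm_fderiv_le (𝕜 := ℝ)
      (fun z _ => hd2 z) (fun z _ => (hC z).2) (Set.mem_univ a) (Set.mem_univ b)
  refine ⟨1 / (C + 1), by positivity, ?_⟩
  intro x hx x' hx'
  have hx0 : φ x = 0 := by rw [hbdry] at hx; exact hx
  have hx'0 : 0 ≤ φ x' := by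
    have hcl : IsClosed {y | 0 ≤ φ y} := isClosed_le continuous_const hφ.continuous
    have hsub : Θ ⊆ {y | 0 ≤ φ y} := by
      rw [hΘ]; intro y hy; exact le_of_lt (show 0 < φ y from hy)
    exact closure_minimal hsub hcl hx'
  have hT : ‖φ x' - φ x - fderiv ℝ φ x (x' - x)‖ ≤ (C * ‖x' - x‖) * ‖x' - x‖ := by
    refine (convex_closedBall x ‖x' - x‖).norm_image_sub_le_of_norm_fderiv_le' (𝕜 := ℝ)
      (fun z _ => hd1 z) (fun z hz => ?_) (Metric.mem_closedBall_self (norm_nonneg _)) ?_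
    · refine (hlip x z).trans ?_
      rw [mem_closedBall_iff_norm] at hz
      gcongr
    · rw [mem_closedBall_iff_norm]
  have hin : ⟪x' - x, gradient φ x⟫ = fderiv ℝ φ x (x' - x) := by
    rw [real_inner_comm]
    simp [gradient]
  rw [hin, norm_sub_rev]
  have h1 := (abs_le.1 (by simpa only [Real.norm_eq_abs] using hT)).2
  have h2 : 0 ≤ ‖x' - x‖ ^ 2 * (C + 1) + fderiv ℝ φ x (x' - x) := by
    nlinarith [sq_nonneg ‖x' - x‖]
  have h3 : ‖x' - x‖ ^ 2 + 1 / (C + 1) * fderiv ℝ φ x (x' - x)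
      = (‖x' - x‖ ^ 2 * (C + 1) + fderiv ℝ φ x (x' - x)) / (C + 1) := by
    field_simp
  rw [h3]
  positivity
end
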